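/- Let B ⊆ {2,…,K} be nonempty, J ⊆ (0,∞) an open interval, and N_a : J → (0,∞) for a ∈ [K] differentiable functions such that for all N ∈ J: Σ_{a∈[K]} N_a(N) = N; N_a is constant on J for every a ∈ B̄^c; g(μ, N(N)) = 0; and W_a(N_1(N), N_a(N)) takes a common value I_B(N) for all a ∈ B. Then for all N ∈ J, writing D = (N_1 + Σ_{a∈B} N_a)·h(B) + d_B^{-1}·h(N): N_1'(N) = N_1·h(B)/D; for every b ∈ B, N_b'(N) = (N_b·h(B) + d_{b,b}^{-1}·h(N))/D; the common index satisfies I_B'(N) = (I_B(N)·h(B) + h(N))/D; and for every a ∈ B̄^c the index I_a(N) = W_a(N_1(N), N_a) satisfies I_a'(N) = N_1'(N)·d(μ_1, x_{1,a}) = N_1·h(B)·d_{1,a}/D. -/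

import Mathlib

open scoped BigOperators

/-- A single-parameter exponential family, given by the log-partition function `b`,
smooth with positive second derivative on an open interval `Θ`, together with the
inverse `θof` of `b'` on the set of means `S = b'(Θ)`. -/
structure SPEF where
  Θ : Set ℝ
  Θ_isOpen : IsOpen Θ
  Θ_ordConnected : Set.OrdConnected Θ
  Θ_nonempty : Θ.Nonempty
  b : ℝ → ℝ
  b_smooth : ContDiffOn ℝ (⊤ : ℕ∞) b Θ
  b_conv : ∀ t ∈ Θ, 0 < iteratedDeriv 2 b t
  θof : ℝ → ℝ
  θof_mem : ∀ μ ∈ deriv b '' Θ, θof μ ∈ Θ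
  θof_spec : ∀ μ ∈ deriv b '' Θ, deriv b (θof μ) = μ

namespace SPEF

/-- The set of means of the family. -/
def S (F : SPEF) : Set ℝ := deriv F.b '' F.Θ

/-- KL divergence `d(μ, x)` between the members of the family with means `μ` and `x`. -/
noncomputable def d (F : SPEF) (μ x : ℝ) : ℝ :=
  (F.θof μ - F.θof x) * μ - F.b (F.θof μ) + F.b (F.θof x)

end SPEF

/-- A `K`-armed bandit instance with arm distributions in a fixed SPEF; arm `0`
(the paper's arm `1`) is the unique best arm. -/
structure Bandit (K : ℕ) [NeZero K] extends SPEF where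
  two_le : 2 ≤ K
  μ : Fin K → ℝ
  μ_mem : ∀ a, μ a ∈ SPEF.S toSPEF
  μ_best : ∀ a : Fin K, a ≠ 0 → μ a < μ 0

namespace Bandit

variable {K : ℕ} [NeZero K]

/-- KL divergence of the underlying family. -/
noncomputable def d (M : Bandit K) : ℝ → ℝ → ℝ := M.toSPEF.d

/-- The weighted mean `x_{1,a}(N₁, N_a)`. -/
noncomputable def x1 (M : Bandit K) (a : Fin K) (N1 Na : ℝ) : ℝ :=
  (N1 * M.μ 0 + Na * M.μ a) / (N1 + Na)

/-- The index `W_a(N₁, N_a)` of an arm `a ≠ 1`. -/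
noncomputable def W (M : Bandit K) (a : Fin K) (N1 Na : ℝ) : ℝ :=
  N1 * M.d (M.μ 0) (M.x1 a N1 Na) + Na * M.d (M.μ a) (M.x1 a N1 Na)

/-- The set `{2, …, K}` of suboptimal arms. -/
def alt (K : ℕ) [NeZero K] : Finset (Fin K) := Finset.univ.filter (fun a => a ≠ 0)

/-- The anchor function `g(μ, N)`. -/
noncomputable def g (M : Bandit K) (Nv : Fin K → ℝ) : ℝ :=
  (∑ a ∈ alt K, M.d (M.μ 0) (M.x1 a (Nv 0) (Nv a)) / M.d (M.μ a) (M.x1 a (Nv 0) (Nv a))) - 1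

end Bandit

open Bandit

namespace Bandit

variable {K : ℕ} [NeZero K]

/-- Partial derivative of the KL divergence `d` in its second argument. -/
noncomputable def d2 (M : Bandit K) (μv x : ℝ) : ℝ := deriv (fun y => M.d μv y) x

/-- The quantity `f(μ, a, N)`, the negative of the derivative of `g` w.r.t. `x_{1,a}`. -/
noncomputable def fq (M : Bandit K) (a : Fin K) (Nv : Fin K → ℝ) : ℝ :=
  (M.d (M.μ 0) (M.x1 a (Nv 0) (Nv a)) / M.d (M.μ a) (M.x1 a (Nv 0) (Nv a))) *
    (M.d2 (M.μ a) (M.x1 a (Nv 0) (Nv a)) / M.d (M.μ a) (M.x1 a (Nv 0) (Nv a)) -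
      M.d2 (M.μ 0) (M.x1 a (Nv 0) (Nv a)) / M.d (M.μ 0) (M.x1 a (Nv 0) (Nv a)))

/-- The quantity `h_a(μ, N₁, N_a) = f(μ, a, N)·N₁²·Δ_a/(N₁+N_a)²`. -/
noncomputable def hq (M : Bandit K) (a : Fin K) (Nv : Fin K → ℝ) : ℝ :=
  M.fq a Nv * ((Nv 0) ^ 2 * (M.μ 0 - M.μ a) / (Nv 0 + Nv a) ^ 2)

/-- The quantity `h(B) = Σ_{a∈B} h_a·d_{a,a}⁻¹`. -/
noncomputable def hB (M : Bandit K) (B : Finset (Fin K)) (Nv : Fin K → ℝ) : ℝ :=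
  ∑ a ∈ B, M.hq a Nv / M.d (M.μ a) (M.x1 a (Nv 0) (Nv a))

/-- The quantity `h(N) = Σ_{a∈B̄ᶜ} h_a·N_a`. -/
noncomputable def hN (M : Bandit K) (B : Finset (Fin K)) (Nv : Fin K → ℝ) : ℝ :=
  ∑ a ∈ alt K \ B, M.hq a Nv * Nv a

/-- The quantity `d_B = (Σ_{a∈B} d_{a,a}⁻¹)⁻¹`. -/
noncomputable def dB (M : Bandit K) (B : Finset (Fin K)) (Nv : Fin K → ℝ) : ℝ :=
  (∑ a ∈ B, (M.d (M.μ a) (M.x1 a (Nv 0) (Nv a)))⁻¹)⁻¹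

end Bandit

namespace SPEF

variable (F : SPEF)

lemma contDiffAt_b {t : ℝ} (ht : t ∈ F.Θ) : ContDiffAt ℝ (⊤ : ℕ∞) F.b t :=
  F.b_smooth.contDiffAt (F.Θ_isOpen.mem_nhds ht)

lemma hasDerivAt_b {t : ℝ} (ht : t ∈ F.Θ) : HasDerivAt F.b (deriv F.b t) t :=
  ((F.contDiffAt_b ht).differentiableAt (by simp)).hasDerivAt

lemma hasStrictDerivAt_deriv_b {t : ℝ} (ht : t ∈ F.Θ) :
    HasStrictDerivAt (deriv F.b) (iteratedDeriv 2 F.b t) t := by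
  have hb : ContDiffAt ℝ 1 (deriv F.b) t :=
    (F.b_smooth.deriv_of_isOpen F.Θ_isOpen
      (WithTop.coe_le_coe.2 (le_top : (1 : ℕ∞) + 1 ≤ ⊤))).contDiffAt (F.Θ_isOpen.mem_nhds ht)
  rw [iteratedDeriv_succ, iteratedDeriv_one]
  exact hb.hasStrictDerivAt (by simp)

lemma strictMonoOn_deriv_b : StrictMonoOn (deriv F.b) F.Θ := by
  refine strictMonoOn_of_deriv_pos F.Θ_ordConnected.convex
    (fun t ht => (F.hasStrictDerivAt_deriv_b ht).hasDerivAt.continuousAt.continuousWithinAt)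
    (fun t ht => ?_)
  have ht' := interior_subset ht
  rw [(F.hasStrictDerivAt_deriv_b ht').hasDerivAt.deriv]
  exact F.b_conv t ht'

lemma θof_deriv_b {t : ℝ} (ht : t ∈ F.Θ) : F.θof (deriv F.b t) = t :=
  F.strictMonoOn_deriv_b.injOn (F.θof_mem _ ⟨t, ht, rfl⟩) ht (F.θof_spec _ ⟨t, ht, rfl⟩)

lemma S_mem_nhds {x : ℝ} (hx : x ∈ F.S) : F.S ∈ nhds x := by
  obtain ⟨t, ht, rfl⟩ := hx
  rw [← (F.hasStrictDerivAt_deriv_b ht).map_nhds_eq (F.b_conv t ht).ne']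
  exact Filter.image_mem_map (F.Θ_isOpen.mem_nhds ht)

lemma S_ordConnected : F.S.OrdConnected :=
  (F.Θ_ordConnected.isPreconnected.image _ fun _ ht =>
    (F.hasStrictDerivAt_deriv_b ht).hasDerivAt.continuousAt.continuousWithinAt).ordConnected

lemma θof_strictMonoOn : StrictMonoOn F.θof F.S := by
  intro x hx y hy hxy
  rw [← F.strictMonoOn_deriv_b.lt_iff_lt (F.θof_mem x hx) (F.θof_mem y hy),
    F.θof_spec x hx, F.θof_spec y hy]
  exact hxy

lemma θof_image_S : F.θof '' F.S = F.Θ := by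
  apply Set.Subset.antisymm
  · rintro _ ⟨x, hx, rfl⟩
    exact F.θof_mem x hx
  · exact fun t ht => ⟨deriv F.b t, ⟨t, ht, rfl⟩, F.θof_deriv_b ht⟩

lemma hasDerivAt_θof {x : ℝ} (hx : x ∈ F.S) :
    HasDerivAt F.θof (iteratedDeriv 2 F.b (F.θof x))⁻¹ x := by
  have hmem := F.θof_mem x hx
  refine HasDerivAt.of_local_left_inverse ?_ (F.hasStrictDerivAt_deriv_b hmem).hasDerivAt
    (F.b_conv _ hmem).ne' (Filter.eventually_of_mem (F.S_mem_nhds hx) F.θof_spec)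
  refine F.θof_strictMonoOn.continuousAt_of_image_mem_nhds (F.S_mem_nhds hx) ?_
  rw [F.θof_image_S]
  exact F.Θ_isOpen.mem_nhds hmem

lemma hasDerivAt_d (μ : ℝ) {x : ℝ} (hx : x ∈ F.S) :
    HasDerivAt (F.d μ) ((iteratedDeriv 2 F.b (F.θof x))⁻¹ * (x - μ)) x := by
  have hθ := F.hasDerivAt_θof hx
  have hb := (F.hasDerivAt_b (F.θof_mem x hx)).comp x hθ
  rw [F.θof_spec x hx] at hb
  have h := (((hθ.const_sub (F.θof μ)).mul_const μ).sub_const (F.b (F.θof μ))).add hb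
  refine h.congr_deriv ?_
  ring

lemma d_pos {μ x : ℝ} (hμ : μ ∈ F.S) (hx : x ∈ F.S) (hne : μ ≠ x) : 0 < F.d μ x := by
  have hμΘ := F.θof_mem μ hμ
  have hxΘ := F.θof_mem x hx
  have hconv : StrictConvexOn ℝ F.Θ F.b :=
    (F.strictMonoOn_deriv_b.mono interior_subset).strictConvexOn_of_deriv
      F.Θ_ordConnected.convex F.b_smooth.continuousOn
  have hd := F.hasDerivAt_b hμΘ
  rw [F.θof_spec μ hμ] at hd
  unfold d
  rcases lt_or_gt_of_ne hne with h | h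
  · have hlt := F.θof_strictMonoOn hμ hx h
    have := hconv.lt_slope_of_hasDerivAt hμΘ hxΘ hlt hd
    rw [slope_def_field, lt_div_iff₀ (sub_pos.2 hlt)] at this
    linarith
  · have hlt := F.θof_strictMonoOn hx hμ h
    have := hconv.slope_lt_of_hasDerivAt hxΘ hμΘ hlt hd
    rw [slope_def_field, div_lt_iff₀ (sub_pos.2 hlt)] at this
    linarith

end SPEF

namespace Bandit

variable {K : ℕ} [NeZero K] (M : Bandit K)

section Arm

variable {a : Fin K} {N₁ Nₐ : ℝ}

lemma mem_alt : a ∈ alt K ↔ a ≠ 0 := by simp [alt]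

lemma x1_lt (ha : a ≠ 0) (h₁ : 0 < N₁) (hₐ : 0 < Nₐ) : M.x1 a N₁ Nₐ < M.μ 0 := by
  have := mul_lt_mul_of_pos_left (M.μ_best a ha) hₐ
  rw [x1, div_lt_iff₀ (by positivity)]
  linarith

lemma lt_x1 (ha : a ≠ 0) (h₁ : 0 < N₁) (hₐ : 0 < Nₐ) : M.μ a < M.x1 a N₁ Nₐ := by
  have := mul_lt_mul_of_pos_left (M.μ_best a ha) h₁
  rw [x1, lt_div_iff₀ (by positivity)]
  linarith

lemma x1_mem (ha : a ≠ 0) (h₁ : 0 < N₁) (hₐ : 0 < Nₐ) : M.x1 a N₁ Nₐ ∈ M.toSPEF.S :=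
  M.toSPEF.S_ordConnected.out (M.μ_mem a) (M.μ_mem 0)
    ⟨(M.lt_x1 ha h₁ hₐ).le, (M.x1_lt ha h₁ hₐ).le⟩

lemma d_best_pos (ha : a ≠ 0) (h₁ : 0 < N₁) (hₐ : 0 < Nₐ) :
    0 < M.d (M.μ 0) (M.x1 a N₁ Nₐ) :=
  M.toSPEF.d_pos (M.μ_mem 0) (M.x1_mem ha h₁ hₐ) (M.x1_lt ha h₁ hₐ).ne'

lemma d_self_pos (ha : a ≠ 0) (h₁ : 0 < N₁) (hₐ : 0 < Nₐ) :
    0 < M.d (M.μ a) (M.x1 a N₁ Nₐ) :=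
  M.toSPEF.d_pos (M.μ_mem a) (M.x1_mem ha h₁ hₐ) (M.lt_x1 ha h₁ hₐ).ne

lemma d2_eq (ν : ℝ) {x : ℝ} (hx : x ∈ M.toSPEF.S) :
    M.d2 ν x = (iteratedDeriv 2 M.b (M.θof x))⁻¹ * (x - ν) :=
  (M.toSPEF.hasDerivAt_d ν hx).deriv

lemma hasDerivAt_d (ν : ℝ) {x : ℝ} (hx : x ∈ M.toSPEF.S) :
    HasDerivAt (M.d ν) (M.d2 ν x) x :=
  (M.toSPEF.hasDerivAt_d ν hx).differentiableAt.hasDerivAt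

end Arm

lemma hq_pos {a : Fin K} (ha : a ≠ 0) {Nv : Fin K → ℝ} (hpos : ∀ i, 0 < Nv i) :
    0 < M.hq a Nv := by
  have h₁ := hpos 0
  have hₐ := hpos a
  have hx := M.x1_mem ha h₁ hₐ
  have hθ := inv_pos.2 (M.b_conv _ (M.θof_mem _ hx))
  have hd₁ := M.d_best_pos ha h₁ hₐ
  have hdₐ := M.d_self_pos ha h₁ hₐ
  have hself : 0 < M.d2 (M.μ a) (M.x1 a (Nv 0) (Nv a)) := by
    rw [M.d2_eq _ hx]
    exact mul_pos hθ (sub_pos.2 (M.lt_x1 ha h₁ hₐ))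
  have hbest : M.d2 (M.μ 0) (M.x1 a (Nv 0) (Nv a)) < 0 := by
    rw [M.d2_eq _ hx]
    exact mul_neg_of_pos_of_neg hθ (sub_neg.2 (M.x1_lt ha h₁ hₐ))
  have hΔ := sub_pos.2 (M.μ_best a ha)
  have hf : 0 < M.fq a Nv :=
    mul_pos (div_pos hd₁ hdₐ)
      (sub_pos.2 ((div_neg_of_neg_of_pos hbest hd₁).trans (div_pos hself hdₐ)))
  unfold hq
  positivity

section Trajectory

variable {a : Fin K} {Nf : ℝ → Fin K → ℝ} {N' : Fin K → ℝ} {t : ℝ}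

lemma hasDerivAt_x1 (hpos : ∀ i, 0 < Nf t i)
    (hN : ∀ i, HasDerivAt (fun s => Nf s i) (N' i) t) :
    HasDerivAt (fun s => M.x1 a (Nf s 0) (Nf s a))
      ((M.μ 0 - M.μ a) * (N' 0 * Nf t a - Nf t 0 * N' a) / (Nf t 0 + Nf t a) ^ 2) t := by
  have hne : Nf t 0 + Nf t a ≠ 0 := (add_pos (hpos 0) (hpos a)).ne'
  refine ((((hN 0).mul_const (M.μ 0)).add ((hN a).mul_const (M.μ a))).div
    ((hN 0).add (hN a)) hne).congr_deriv ?_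
  simp only [Pi.add_apply]
  congr 1
  ring

lemma hasDerivAt_W (ha : a ≠ 0) (hpos : ∀ i, 0 < Nf t i)
    (hN : ∀ i, HasDerivAt (fun s => Nf s i) (N' i) t) :
    HasDerivAt (fun s => M.W a (Nf s 0) (Nf s a))
      (N' 0 * M.d (M.μ 0) (M.x1 a (Nf t 0) (Nf t a)) +
        N' a * M.d (M.μ a) (M.x1 a (Nf t 0) (Nf t a))) t := by
  have hx := M.x1_mem ha (hpos 0) (hpos a)
  have hx' := M.hasDerivAt_x1 (a := a) hpos hN
  have hd (ν : ℝ) := HasDerivAt.comp t (M.hasDerivAt_d ν hx) hx'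
  refine (((hN 0).mul (hd (M.μ 0))).add ((hN a).mul (hd (M.μ a)))).congr_deriv ?_
  have hbal : Nf t 0 * M.d2 (M.μ 0) (M.x1 a (Nf t 0) (Nf t a)) +
      Nf t a * M.d2 (M.μ a) (M.x1 a (Nf t 0) (Nf t a)) = 0 := by
    have hne : Nf t 0 + Nf t a ≠ 0 := (add_pos (hpos 0) (hpos a)).ne'
    have hmean : M.x1 a (Nf t 0) (Nf t a) * (Nf t 0 + Nf t a) =
        Nf t 0 * M.μ 0 + Nf t a * M.μ a := div_mul_cancel₀ _ hne
    rw [M.d2_eq _ hx, M.d2_eq _ hx]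
    linear_combination (iteratedDeriv 2 M.b (M.θof (M.x1 a (Nf t 0) (Nf t a))))⁻¹ * hmean
  simp only [Function.comp_apply]
  linear_combination ((M.μ 0 - M.μ a) * (N' 0 * Nf t a - Nf t 0 * N' a) /
    (Nf t 0 + Nf t a) ^ 2) * hbal

lemma hasDerivAt_g (hpos : ∀ i, 0 < Nf t i)
    (hN : ∀ i, HasDerivAt (fun s => Nf s i) (N' i) t) :
    HasDerivAt (fun s => M.g (Nf s))
      (∑ a ∈ alt K, M.hq a (Nf t) * (Nf t 0 * N' a - N' 0 * Nf t a) / Nf t 0 ^ 2) t := by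
  refine (HasDerivAt.fun_sum fun a ha => ?_).sub_const 1
  rw [mem_alt] at ha
  have hx := M.x1_mem ha (hpos 0) (hpos a)
  have hx' := M.hasDerivAt_x1 (a := a) hpos hN
  have hd (ν : ℝ) := HasDerivAt.comp t (M.hasDerivAt_d ν hx) hx'
  have hd₁ := (M.d_best_pos ha (hpos 0) (hpos a)).ne'
  have hdₐ := (M.d_self_pos ha (hpos 0) (hpos a)).ne'
  have h₁ := (hpos 0).ne'
  have hne : Nf t 0 + Nf t a ≠ 0 := (add_pos (hpos 0) (hpos a)).ne'
  refine ((hd (M.μ 0)).div (hd (M.μ a)) hdₐ).congr_deriv ?_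
  simp only [Function.comp_apply, hq, fq]
  field_simp
  ring

end Trajectory

end Bandit

/-- Solution of the linear system satisfied by the rates `n'` and `I'` along a fluid trajectory. -/
lemma fluid_linear_system {ι : Type*} (B : Finset ι) (n n' d₁ d h : ι → ℝ)
    {n₁ n₁' I I' hC : ℝ} (hBne : B.Nonempty) (hn₁ : 0 < n₁) (hn : ∀ b ∈ B, 0 < n b)
    (hd : ∀ b ∈ B, 0 < d b) (hh : ∀ b ∈ B, 0 < h b) (hC_nonneg : 0 ≤ hC)
    (hsum : n₁' + ∑ b ∈ B, n' b = 1)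
    (hI : ∀ b ∈ B, n₁ * d₁ b + n b * d b = I)
    (hI' : ∀ b ∈ B, n₁' * d₁ b + n' b * d b = I')
    (hanchor : ∑ b ∈ B, h b * (n₁ * n' b - n₁' * n b) = n₁' * hC) :
    let H := ∑ b ∈ B, h b / d b
    let D := (n₁ + ∑ b ∈ B, n b) * H + (∑ b ∈ B, (d b)⁻¹) * hC
    n₁' = n₁ * H / D ∧ (∀ b ∈ B, n' b = (n b * H + (d b)⁻¹ * hC) / D) ∧
      I' = (I * H + hC) / D := by
  intro H D
  have hH : 0 < H := Finset.sum_pos (fun b hb => div_pos (hh b hb) (hd b hb)) hBne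
  have hD : 0 < D := by
    have h1 : 0 ≤ ∑ b ∈ B, n b := Finset.sum_nonneg fun b hb => (hn b hb).le
    have h2 : 0 ≤ ∑ b ∈ B, (d b)⁻¹ := Finset.sum_nonneg fun b hb => (inv_pos.2 (hd b hb)).le
    positivity
  have hcross : ∀ b ∈ B, n₁ * n' b - n₁' * n b = (n₁ * I' - n₁' * I) * (d b)⁻¹ := by
    intro b hb
    rw [← div_eq_mul_inv, eq_div_iff (hd b hb).ne', ← hI b hb, ← hI' b hb]
    ring
  have hkey : (n₁ * I' - n₁' * I) * H = n₁' * hC := by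
    rw [← hanchor, Finset.mul_sum]
    refine Finset.sum_congr rfl fun b hb => ?_
    rw [hcross b hb]
    ring
  have htotal : n₁ * ∑ b ∈ B, n' b - n₁' * ∑ b ∈ B, n b =
      (n₁ * I' - n₁' * I) * ∑ b ∈ B, (d b)⁻¹ := by
    simp only [Finset.mul_sum, ← Finset.sum_sub_distrib]
    exact Finset.sum_congr rfl hcross
  have hrate : n₁' * D = n₁ * H := by
    simp only [D]
    linear_combination n₁ * H * hsum - H * htotal - (∑ b ∈ B, (d b)⁻¹) * hkey
  refine ⟨(eq_div_iff hD.ne').2 hrate, fun b hb => (eq_div_iff hD.ne').2 ?_,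
    (eq_div_iff hD.ne').2 ?_⟩
  · apply mul_left_cancel₀ (mul_pos hn₁ hH).ne'
    linear_combination D * H * hcross b hb + D * (d b)⁻¹ * hkey +
      (n b * H + (d b)⁻¹ * hC) * hrate
  · apply mul_left_cancel₀ (mul_pos hn₁ hH).ne'
    linear_combination D * hkey + (I * H + hC) * hrate

/-- Theorem 4.3, fluid ODEs: along a fluid trajectory keeping `g = 0` and
the indexes of the arms in `B` equal, the allocation rates and index derivative are given
by the stated formulas, and the indexes off `B` grow at rate `N₁'·d(μ₁, x_{1,a})`. -/
theorem statement_6 {K : ℕ} [NeZero K] (M : Bandit K)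
    (B : Finset (Fin K)) (hBne : B.Nonempty) (hBsub : B ⊆ alt K)
    (J : Set ℝ) (hJopen : IsOpen J) (hJconn : Set.OrdConnected J) (hJpos : J ⊆ Set.Ioi 0)
    (Nf Nf' : ℝ → Fin K → ℝ) (IB : ℝ → ℝ)
    (hpos : ∀ N ∈ J, ∀ a, 0 < Nf N a)
    (hderiv : ∀ N ∈ J, ∀ a, HasDerivAt (fun t => Nf t a) (Nf' N a) N)
    (hsum : ∀ N ∈ J, ∑ a, Nf N a = N)
    (hconst : ∀ a ∈ alt K \ B, ∀ N ∈ J, ∀ N' ∈ J, Nf N a = Nf N' a)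
    (hg : ∀ N ∈ J, M.g (Nf N) = 0)
    (hIB : ∀ N ∈ J, ∀ a ∈ B, M.W a (Nf N 0) (Nf N a) = IB N) :
    ∀ N ∈ J,
      Nf' N 0 =
        Nf N 0 * M.hB B (Nf N) /
          ((Nf N 0 + ∑ a ∈ B, Nf N a) * M.hB B (Nf N) + (M.dB B (Nf N))⁻¹ * M.hN B (Nf N)) ∧
      (∀ b ∈ B, Nf' N b =
        (Nf N b * M.hB B (Nf N) +
            (M.d (M.μ b) (M.x1 b (Nf N 0) (Nf N b)))⁻¹ * M.hN B (Nf N)) /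
          ((Nf N 0 + ∑ a ∈ B, Nf N a) * M.hB B (Nf N) + (M.dB B (Nf N))⁻¹ * M.hN B (Nf N))) ∧
      HasDerivAt IB
        ((IB N * M.hB B (Nf N) + M.hN B (Nf N)) /
          ((Nf N 0 + ∑ a ∈ B, Nf N a) * M.hB B (Nf N) + (M.dB B (Nf N))⁻¹ * M.hN B (Nf N))) N ∧
      ∀ a ∈ alt K \ B,
        HasDerivAt (fun t => M.W a (Nf t 0) (Nf t a))
          (Nf' N 0 * M.d (M.μ 0) (M.x1 a (Nf N 0) (Nf N a))) N ∧
        Nf' N 0 * M.d (M.μ 0) (M.x1 a (Nf N 0) (Nf N a)) =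
          Nf N 0 * M.hB B (Nf N) * M.d (M.μ 0) (M.x1 a (Nf N 0) (Nf N a)) /
            ((Nf N 0 + ∑ b ∈ B, Nf N b) * M.hB B (Nf N) +
              (M.dB B (Nf N))⁻¹ * M.hN B (Nf N)) := by
  intro N hN
  have hJ := hJopen.mem_nhds hN
  have hne0 : ∀ a ∈ B, a ≠ 0 := fun a ha => mem_alt.1 (hBsub ha)
  have hNf0 : ∀ a ∈ alt K \ B, Nf' N a = 0 := fun a ha =>
    (hderiv N hN a).unique ((hasDerivAt_const N (Nf N a)).congr_of_eventuallyEq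
      (Filter.eventually_of_mem hJ fun t ht => hconst a ha t ht N hN))
  have hsplit (u : Fin K → ℝ) : ∑ a ∈ alt K, u a = ∑ a ∈ alt K \ B, u a + ∑ a ∈ B, u a :=
    (Finset.sum_sdiff hBsub).symm
  have hrates : Nf' N 0 + ∑ b ∈ B, Nf' N b = 1 := by
    have htot : ∑ a, Nf' N a = 1 :=
      (HasDerivAt.fun_sum fun a _ => hderiv N hN a).unique
        ((hasDerivAt_id N).congr_of_eventuallyEq (Filter.eventually_of_mem hJ hsum))
    have halt : alt K = Finset.univ.erase 0 := by ext a; simp [alt]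
    rw [← Finset.add_sum_erase _ _ (Finset.mem_univ 0), ← halt, hsplit,
      Finset.sum_eq_zero hNf0, zero_add] at htot
    exact htot
  have hIB_deriv : ∀ b ∈ B, HasDerivAt IB
      (Nf' N 0 * M.d (M.μ 0) (M.x1 b (Nf N 0) (Nf N b)) +
        Nf' N b * M.d (M.μ b) (M.x1 b (Nf N 0) (Nf N b))) N := fun b hb =>
    (M.hasDerivAt_W (hne0 b hb) (hpos N hN) (hderiv N hN)).congr_of_eventuallyEq
      (Filter.eventually_of_mem hJ fun t ht => (hIB t ht b hb).symm)
  have hanchor : ∑ b ∈ B, M.hq b (Nf N) * (Nf N 0 * Nf' N b - Nf' N 0 * Nf N b) =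
      Nf' N 0 * M.hN B (Nf N) := by
    have hzero := (M.hasDerivAt_g (hpos N hN) (hderiv N hN)).unique
      ((hasDerivAt_const N (0 : ℝ)).congr_of_eventuallyEq (Filter.eventually_of_mem hJ hg))
    rw [← Finset.sum_div, div_eq_zero_iff,
      or_iff_left (pow_ne_zero 2 (hpos N hN 0).ne'), hsplit] at hzero
    have hoff : ∑ a ∈ alt K \ B, M.hq a (Nf N) * (Nf N 0 * Nf' N a - Nf' N 0 * Nf N a) =
        -(Nf' N 0 * M.hN B (Nf N)) := by
      rw [Bandit.hN, Finset.mul_sum, ← Finset.sum_neg_distrib]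
      refine Finset.sum_congr rfl fun a ha => ?_
      rw [hNf0 a ha]
      ring
    linarith
  have hhN : 0 ≤ M.hN B (Nf N) := Finset.sum_nonneg fun a ha =>
    (mul_pos (M.hq_pos (mem_alt.1 (Finset.mem_sdiff.1 ha).1) (hpos N hN)) (hpos N hN a)).le
  obtain ⟨b₀, hb₀⟩ := id hBne
  have hdB : (M.dB B (Nf N))⁻¹ =
      ∑ a ∈ B, (M.d (M.μ a) (M.x1 a (Nf N 0) (Nf N a)))⁻¹ := inv_inv _
  obtain ⟨hrate, hrateB, hrateI⟩ := fluid_linear_system B (Nf N) (Nf' N)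
    (fun b => M.d (M.μ 0) (M.x1 b (Nf N 0) (Nf N b)))
    (fun b => M.d (M.μ b) (M.x1 b (Nf N 0) (Nf N b))) (fun b => M.hq b (Nf N))
    hBne (hpos N hN 0) (fun b _ => hpos N hN b)
    (fun b hb => M.d_self_pos (hne0 b hb) (hpos N hN 0) (hpos N hN b))
    (fun b hb => M.hq_pos (hne0 b hb) (hpos N hN)) hhN hrates (hIB N hN)
    (fun b hb => (hIB_deriv b hb).unique (hIB_deriv b₀ hb₀)) hanchor
  rw [hdB]
  refine ⟨hrate, hrateB, (hIB_deriv b₀ hb₀).congr_deriv hrateI, fun a ha => ⟨?_, ?_⟩⟩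
  · refine (M.hasDerivAt_W (mem_alt.1 (Finset.mem_sdiff.1 ha).1) (hpos N hN)
      (hderiv N hN)).congr_deriv ?_
    rw [hNf0 a ha, zero_mul, add_zero]
  · conv_lhs => rw [hrate]
    rw [div_mul_eq_mul_div]
    rfl
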